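/- Let S be a neighborly combinatorial surface on the vertex set Fin n with n ≥ 4, and let χ denote its Euler characteristic. Then 6·χ = n·(7 − n); in particular 6 divides n·(7 − n), so n mod 6 ∈ {0, 1, 3, 4}. -/

import Mathlib

open Finset

section Defs

variable {α : Type*} [DecidableEq α]

/-- The 1-skeleton graph of a set of faces: two vertices are adjacent
if they lie together in a common face of `S`. -/
def skeletonGraph (S : Finset (Finset α)) : SimpleGraph α where
  Adj a b := a ≠ b ∧ ∃ T ∈ S, a ∈ T ∧ b ∈ T
  symm := by
    refine ⟨?_⟩
    rintro a b ⟨hab, T, hT, ha, hb⟩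
    exact ⟨hab.symm, T, hT, hb, ha⟩
  loopless := by refine ⟨?_⟩; rintro a ⟨h, -⟩; exact h rfl

/-- The link graph of a vertex `v`: `a` and `b` are adjacent
if `{v, a, b}` is a triangle of `S`. -/
def linkGraph (S : Finset (Finset α)) (v : α) : SimpleGraph α where
  Adj a b := a ≠ b ∧ ({v, a, b} : Finset α) ∈ S
  symm := by
    refine ⟨?_⟩
    rintro a b ⟨hab, h⟩
    refine ⟨hab.symm, ?_⟩
    rwa [Finset.pair_comm b a]
  loopless := by refine ⟨?_⟩; rintro a ⟨h, -⟩; exact h rfl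

/-- The set of neighbors of the vertex `v` in `S`. -/
def nbrSet (S : Finset (Finset α)) (v : α) : Set α :=
  {a | a ≠ v ∧ ∃ T ∈ S, v ∈ T ∧ a ∈ T}

/-- The edges of `S`: the 2-element subsets of `V` contained in some face of `S`. -/
def edgesOn (V : Finset α) (S : Finset (Finset α)) : Finset (Finset α) :=
  V.powerset.filter fun e => e.card = 2 ∧ ∃ T ∈ S, e ⊆ T

/-- `S` is a combinatorial surface on the vertex set `V`: all faces are triangles
on `V`, every vertex of `V` lies in a triangle, every edge lies in exactly two
triangles, the link graph of every vertex (induced on the neighbors of the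
vertex) is connected, and the 1-skeleton (induced on `V`) is connected. -/
def IsCombSurfaceOn (V : Finset α) (S : Finset (Finset α)) : Prop :=
  (∀ T ∈ S, T.card = 3 ∧ T ⊆ V) ∧
  (∀ v ∈ V, ∃ T ∈ S, v ∈ T) ∧
  (∀ e : Finset α, e.card = 2 → (∃ T ∈ S, e ⊆ T) →
    (S.filter fun T => e ⊆ T).card = 2) ∧
  (∀ v ∈ V, ((linkGraph S v).induce (nbrSet S v)).Connected) ∧
  ((skeletonGraph S).induce (V : Set α)).Connected

/-- The Euler characteristic `χ = |V| - f₁ + f₂` of `S` on the vertex set `V`. -/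
def eulerCharOn (V : Finset α) (S : Finset (Finset α)) : ℤ :=
  (V.card : ℤ) - ((edgesOn V S).card : ℤ) + (S.card : ℤ)

/-- `S` is equivelar (degree-regular): all vertices of `V` lie in the same
number `q` of triangles. -/
def IsEquivelarOn (V : Finset α) (S : Finset (Finset α)) : Prop :=
  ∃ q : ℕ, ∀ v ∈ V, (S.filter fun T => v ∈ T).card = q

/-- The directed edges of the cyclic ordering given by an ordered triple. -/
def dirEdges (t : α × α × α) : Finset (α × α) :=
  {(t.1, t.2.1), (t.2.1, t.2.2), (t.2.2, t.1)}

/-- `S` is orientable: one can choose a cyclic ordering of each triangle so that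
for every edge `{a, b}` lying in two triangles, the two chosen cyclic orderings
traverse the edge in opposite directions. -/
def IsOrientable (S : Finset (Finset α)) : Prop :=
  ∃ o : Finset α → α × α × α,
    (∀ T ∈ S, ({(o T).1, (o T).2.1, (o T).2.2} : Finset α) = T) ∧
    (∀ T ∈ S, ∀ T' ∈ S, T ≠ T' → ∀ x y : α,
      (x, y) ∈ dirEdges (o T) → ({x, y} : Finset α) ⊆ T' →
      (y, x) ∈ dirEdges (o T'))

/-- The link of a vertex `v` in a 3-dimensional complex `S`:
the triangles `{a,b,c}` with `{v,a,b,c} ∈ S`. -/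
def linkOf (S : Finset (Finset α)) (v : α) : Finset (Finset α) :=
  (S.filter fun T => v ∈ T).image fun T => T.erase v

end Defs

/-- `S` is a combinatorial surface on the vertex set `Fin n`. -/
def IsCombSurface (n : ℕ) (S : Finset (Finset (Fin n))) : Prop :=
  IsCombSurfaceOn Finset.univ S

/-- The Euler characteristic of a complex on the vertex set `Fin n`. -/
def eulerChar (n : ℕ) (S : Finset (Finset (Fin n))) : ℤ :=
  eulerCharOn Finset.univ S

/-- `S` is equivelar on `Fin n`. -/
def IsEquivelar (n : ℕ) (S : Finset (Finset (Fin n))) : Prop :=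
  IsEquivelarOn Finset.univ S

/-- `S` is neighborly: every 2-element subset of `Fin n` is an edge. -/
def IsNeighborly (n : ℕ) (S : Finset (Finset (Fin n))) : Prop :=
  ∀ e : Finset (Fin n), e.card = 2 → ∃ T ∈ S, e ⊆ T

/-- Two labeled complexes on `Fin n` are isomorphic if a permutation of the
vertices maps the faces of one onto the faces of the other. -/
def IsoComplex (n : ℕ) (S S' : Finset (Finset (Fin n))) : Prop :=
  ∃ σ : Equiv.Perm (Fin n), S.image (fun T => T.image σ) = S'

/-- The number of isomorphism classes (orbits under the symmetric group)
of complexes on `Fin n` satisfying `P`. -/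
noncomputable def numClasses (n : ℕ) (P : Finset (Finset (Fin n)) → Prop) : ℕ :=
  Nat.card (Quot fun A B : {S : Finset (Finset (Fin n)) // P S} => IsoComplex n A.1 B.1)

/-- The neighbors of a vertex `v` in a complex `S` on `Fin n`. -/
def vertexNbrs (n : ℕ) (S : Finset (Finset (Fin n))) (v : Fin n) : Finset (Fin n) :=
  Finset.univ.filter fun a => a ≠ v ∧ ∃ T ∈ S, v ∈ T ∧ a ∈ T

/-- `S` is a combinatorial 3-manifold on the vertex set `Fin n`: all faces are
tetrahedra, every vertex lies in a tetrahedron, every triangle contained in a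
tetrahedron lies in exactly two tetrahedra, the link of every vertex is a
combinatorial surface (on the neighbors of the vertex) with Euler
characteristic 2, and the 1-skeleton is connected. -/
def IsComb3Manifold (n : ℕ) (S : Finset (Finset (Fin n))) : Prop :=
  (∀ T ∈ S, T.card = 4) ∧
  (∀ v : Fin n, ∃ T ∈ S, v ∈ T) ∧
  (∀ F : Finset (Fin n), F.card = 3 → (∃ T ∈ S, F ⊆ T) →
    (S.filter fun T => F ⊆ T).card = 2) ∧
  (∀ v : Fin n, IsCombSurfaceOn (vertexNbrs n S v) (linkOf S v) ∧
    eulerCharOn (vertexNbrs n S v) (linkOf S v) = 2) ∧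
  (skeletonGraph S).Connected

/-!
Count the incident pairs (edge, triangle). An edge lies in two triangles and a triangle has three
edges, so `2 f₁ = 3 f₂` and `3 χ = 3 |V| - f₁`; for a neighborly complex `f₁` is `|V|` choose `2`.
-/

theorem two_mul_cast_choose_two (n : ℕ) : 2 * (n.choose 2 : ℤ) = n * (n - 1) := by
  qify
  rw [Nat.cast_choose_two]
  ring

theorem six_dvd_mul_seven_sub_iff (n : ℕ) :
    (6 : ℤ) ∣ n * (7 - n) ↔ n % 6 ∈ ({0, 1, 3, 4} : Finset ℕ) := by
  have residues : ∀ x : ZMod 6, x * (7 - x) = 0 ↔ x.val ∈ ({0, 1, 3, 4} : Finset ℕ) := by decide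
  have dvd_iff : (6 : ℤ) ∣ n * (7 - n) ↔ (n : ZMod 6) * (7 - n) = 0 := by
    simpa using (ZMod.intCast_zmod_eq_zero_iff_dvd (n * (7 - n)) 6).symm
  rw [dvd_iff, residues, ZMod.val_natCast]

section Pseudosurface

variable {α : Type*} [DecidableEq α] {V : Finset α} {S : Finset (Finset α)}

/-- A closed pseudosurface on the vertex set `V`: a set of triangles on `V` in which every edge lies
in exactly two triangles. Unlike in `IsCombSurfaceOn`, neither the vertex links nor the 1-skeleton
need be connected, and points of `V` may lie in no triangle. -/
structure IsPseudosurfaceOn (V : Finset α) (S : Finset (Finset α)) : Prop where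
  card_face : ∀ T ∈ S, #T = 3
  face_subset : ∀ T ∈ S, T ⊆ V
  card_filter_edge_subset : ∀ e ∈ edgesOn V S, #{T ∈ S | e ⊆ T} = 2

/-- A complex is neighborly on `V` if every 2-element subset of `V` is contained in a face; this is
`IsNeighborly` for an arbitrary vertex set. -/
def IsNeighborlyOn (V : Finset α) (S : Finset (Finset α)) : Prop :=
  ∀ e ∈ V.powersetCard 2, ∃ T ∈ S, e ⊆ T

theorem mem_edgesOn {e : Finset α} :
    e ∈ edgesOn V S ↔ e ∈ V.powersetCard 2 ∧ ∃ T ∈ S, e ⊆ T := by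
  simp only [edgesOn, mem_filter, mem_powerset, mem_powersetCard, and_assoc]

theorem filter_edgesOn_subset_face {T : Finset α} (hT : T ∈ S) (hTV : T ⊆ V) :
    {e ∈ edgesOn V S | e ⊆ T} = T.powersetCard 2 := by
  ext e
  simp only [mem_filter, mem_edgesOn, mem_powersetCard]
  constructor
  · rintro ⟨⟨⟨-, he⟩, -⟩, heT⟩
    exact ⟨heT, he⟩
  · rintro ⟨heT, he⟩
    exact ⟨⟨⟨heT.trans hTV, he⟩, T, hT, heT⟩, heT⟩

theorem sum_edgesOn_card_faces (hV : ∀ T ∈ S, T ⊆ V) :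
    ∑ e ∈ edgesOn V S, #{T ∈ S | e ⊆ T} = ∑ T ∈ S, (#T).choose 2 :=
  calc ∑ e ∈ edgesOn V S, #{T ∈ S | e ⊆ T}
      = ∑ T ∈ S, #{e ∈ edgesOn V S | e ⊆ T} := by
        simpa only [bipartiteAbove, bipartiteBelow] using
          sum_card_bipartiteAbove_eq_sum_card_bipartiteBelow (fun e T : Finset α => e ⊆ T)
    _ = ∑ T ∈ S, (#T).choose 2 := sum_congr rfl fun T hT => by
        rw [filter_edgesOn_subset_face hT (hV T hT), card_powersetCard]

theorem IsNeighborlyOn.edgesOn_eq (hnb : IsNeighborlyOn V S) :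
    edgesOn V S = V.powersetCard 2 := by
  ext e
  rw [mem_edgesOn, and_iff_left_of_imp (hnb e)]

theorem IsCombSurfaceOn.isPseudosurfaceOn (hS : IsCombSurfaceOn V S) : IsPseudosurfaceOn V S := by
  obtain ⟨hface, -, hedge, -, -⟩ := hS
  refine ⟨fun T hT => (hface T hT).1, fun T hT => (hface T hT).2, fun e he => ?_⟩
  obtain ⟨he, heS⟩ := mem_edgesOn.1 he
  exact hedge e (mem_powersetCard.1 he).2 heS

namespace IsPseudosurfaceOn

theorem two_mul_card_edgesOn (hS : IsPseudosurfaceOn V S) : 2 * #(edgesOn V S) = 3 * #S :=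
  calc 2 * #(edgesOn V S)
      = ∑ e ∈ edgesOn V S, #{T ∈ S | e ⊆ T} := by
        rw [sum_const_nat hS.card_filter_edge_subset, mul_comm]
    _ = ∑ T ∈ S, (#T).choose 2 := sum_edgesOn_card_faces hS.face_subset
    _ = 3 * #S := by
        rw [sum_const_nat fun T hT => by rw [hS.card_face T hT, Nat.choose_succ_self_right],
          mul_comm]

theorem three_mul_eulerCharOn (hS : IsPseudosurfaceOn V S) :
    3 * eulerCharOn V S = 3 * #V - #(edgesOn V S) := by
  have edges_faces : 2 * (#(edgesOn V S) : ℤ) = 3 * #S := mod_cast hS.two_mul_card_edgesOn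
  rw [eulerCharOn]
  linarith

theorem six_mul_eulerCharOn (hS : IsPseudosurfaceOn V S) (hnb : IsNeighborlyOn V S) :
    6 * eulerCharOn V S = #V * (7 - #V) := by
  have euler := hS.three_mul_eulerCharOn
  rw [hnb.edgesOn_eq, card_powersetCard] at euler
  linarith [two_mul_cast_choose_two #V]

end IsPseudosurfaceOn

theorem neighborly_euler_char_general (hS : IsPseudosurfaceOn V S) (hnb : IsNeighborlyOn V S) :
    6 * eulerCharOn V S = #V * (7 - #V) ∧
    (6 : ℤ) ∣ #V * (7 - #V) ∧
    #V % 6 ∈ ({0, 1, 3, 4} : Finset ℕ) := by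
  have euler := hS.six_mul_eulerCharOn hnb
  have six_dvd : (6 : ℤ) ∣ #V * (7 - #V) := Dvd.intro _ euler
  exact ⟨euler, six_dvd, (six_dvd_mul_seven_sub_iff #V).1 six_dvd⟩

end Pseudosurface

/-- For a neighborly combinatorial surface on `Fin n`, `n ≥ 4`:
`6·χ = n·(7 - n)`; in particular `6 ∣ n·(7 - n)`, so `n mod 6 ∈ {0,1,3,4}`. -/
theorem neighborly_euler_char (n : ℕ) (hn : 4 ≤ n) (S : Finset (Finset (Fin n)))
    (hS : IsCombSurface n S) (hnb : IsNeighborly n S) :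
    6 * eulerChar n S = (n : ℤ) * (7 - (n : ℤ)) ∧
    (6 : ℤ) ∣ (n : ℤ) * (7 - (n : ℤ)) ∧
    n % 6 ∈ ({0, 1, 3, 4} : Finset ℕ) := by
  simpa only [card_univ, Fintype.card_fin, eulerChar] using neighborly_euler_char_general
    (IsCombSurfaceOn.isPseudosurfaceOn hS) fun e he => hnb e (mem_powersetCard.1 he).2
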